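/- Let X be a quasicompact, quasiseparated topological space whose quasicompact open subsets form a basis of its topology, and let K be any topological space. Then restriction defines a bijection from the set of frame homomorphisms Opens X → Opens K (maps of complete lattices preserving finite meets, including the top element, and arbitrary joins) onto the set of bounded lattice homomorphisms CompactOpens X → Opens K (maps preserving ⊥, ⊤, binary meets, and binary joins). -/

import Mathlib

open TopologicalSpace

instance {α : Type*} [TopologicalSpace α] [QuasiSeparatedSpace α] :
    Lattice (CompactOpens α) :=
  { (inferInstance : SemilatticeSup (CompactOpens α)),
    (inferInstance : SemilatticeInf (CompactOpens α)) with }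

namespace TopologicalSpace.CompactOpens

variable {X : Type*} [TopologicalSpace X]

theorem toOpens_eq_sSup (hbasis : IsTopologicalBasis {U : Set X | IsCompact U ∧ IsOpen U})
    (U : Opens X) : U = sSup (toOpens '' {V : CompactOpens X | V.toOpens ≤ U}) := by
  refine le_antisymm (fun x hx => ?_) (sSup_le ?_)
  · obtain ⟨W, ⟨hWc, hWo⟩, hxW, hWU⟩ := hbasis.exists_subset_of_mem_open hx U.isOpen
    exact Opens.mem_sSup.2 ⟨_, ⟨⟨⟨W, hWc⟩, hWo⟩, hWU, rfl⟩, hxW⟩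
  · rintro _ ⟨V, hV, rfl⟩
    exact hV

variable [CompactSpace X] [QuasiSeparatedSpace X]

/-- The restriction of a frame homomorphism to the lattice of compact open subsets. -/
def restrictFrameHom {L : Type*} [Order.Frame L] (f : FrameHom (Opens X) L) :
    BoundedLatticeHom (CompactOpens X) L where
  toFun U := f U.toOpens
  map_sup' U V := map_sup f U.toOpens V.toOpens
  map_inf' U V := map_inf f U.toOpens V.toOpens
  map_top' := map_top f
  map_bot' := map_bot f

variable {L : Type*} [Order.Frame L]

/-- The value at an open set `U` of the extension of `g` to all open sets: the join of the values
of `g` at the compact open subsets of `U`. -/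
def extend (g : BoundedLatticeHom (CompactOpens X) L) (U : Opens X) : L :=
  ⨆ V : {V : CompactOpens X // V.toOpens ≤ U}, g V

theorem le_extend (g : BoundedLatticeHom (CompactOpens X) L) {V : CompactOpens X} {U : Opens X}
    (h : V.toOpens ≤ U) : g V ≤ extend g U :=
  le_iSup (fun V : {V : CompactOpens X // V.toOpens ≤ U} => g V) ⟨V, h⟩

theorem extend_mono (g : BoundedLatticeHom (CompactOpens X) L) : Monotone (extend g) :=
  fun _ _ h => iSup_le fun V => le_extend g (V.2.trans h)

theorem extend_toOpens (g : BoundedLatticeHom (CompactOpens X) L) (U : CompactOpens X) :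
    extend g U.toOpens = g U :=
  le_antisymm (iSup_le fun V => OrderHomClass.mono g V.2) (le_extend g le_rfl)

theorem extend_inf (g : BoundedLatticeHom (CompactOpens X) L) (U V : Opens X) :
    extend g (U ⊓ V) = extend g U ⊓ extend g V := by
  refine le_antisymm ((extend_mono g).map_inf_le U V) ?_
  rw [extend, extend, iSup_inf_eq]
  refine iSup_le fun A => ?_
  rw [inf_iSup_eq]
  refine iSup_le fun B => ?_
  rw [← map_inf]
  exact le_extend g (inf_le_inf A.2 B.2 : A.1.toOpens ⊓ B.1.toOpens ≤ U ⊓ V)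

theorem extend_sSup (hbasis : IsTopologicalBasis {U : Set X | IsCompact U ∧ IsOpen U})
    (g : BoundedLatticeHom (CompactOpens X) L) (S : Set (Opens X)) :
    extend g (sSup S) = sSup (extend g '' S) := by
  refine le_antisymm (iSup_le fun V => ?_) (sSup_le ?_)
  · obtain ⟨W, hVW, hW⟩ : ∃ W : CompactOpens X, (V.1 : Set X) ⊆ W ∧
        g W ≤ sSup (extend g '' S) := by
      refine V.1.isCompact.induction_on
        (p := fun s => ∃ W : CompactOpens X, s ⊆ W ∧ g W ≤ sSup (extend g '' S))
        ⟨⊥, Set.empty_subset _, by simp⟩ ?_ ?_ ?_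
      · rintro s t hst ⟨W, htW, hW⟩
        exact ⟨W, hst.trans htW, hW⟩
      · rintro s t ⟨A, hsA, hA⟩ ⟨B, htB, hB⟩
        exact ⟨A ⊔ B, Set.union_subset_union hsA htB, by rw [map_sup]; exact sup_le hA hB⟩
      · intro x hx
        obtain ⟨U, hU, hxU⟩ := Opens.mem_sSup.1 (V.2 hx)
        obtain ⟨W, ⟨hWc, hWo⟩, hxW, hWU⟩ := hbasis.exists_subset_of_mem_open hxU U.isOpen
        let W' : CompactOpens X := ⟨⟨W, hWc⟩, hWo⟩
        replace hWU : W'.toOpens ≤ U := hWU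
        refine ⟨W, mem_nhdsWithin_of_mem_nhds (hWo.mem_nhds hxW), W', subset_rfl, ?_⟩
        exact (le_extend g hWU).trans (le_sSup (Set.mem_image_of_mem _ hU))
    exact (OrderHomClass.mono g (show V.1 ≤ W from hVW)).trans hW
  · rintro _ ⟨U, hU, rfl⟩
    exact extend_mono g (le_sSup hU)

/-- When the compact open subsets form a basis, frame homomorphisms out of the frame of opens
correspond to bounded lattice homomorphisms out of the lattice of compact opens. -/
def restrictFrameHomEquiv (hbasis : IsTopologicalBasis {U : Set X | IsCompact U ∧ IsOpen U}) :
    FrameHom (Opens X) L ≃ BoundedLatticeHom (CompactOpens X) L where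
  toFun := restrictFrameHom
  invFun g :=
    { toFun := extend g
      map_inf' := extend_inf g
      map_top' := (extend_toOpens g ⊤).trans (map_top g)
      map_sSup' := extend_sSup hbasis g }
  left_inv f := by
    ext U
    change ⨆ V : {V : CompactOpens X // V.toOpens ≤ U}, f V.1.toOpens = f U
    conv_rhs => rw [toOpens_eq_sSup hbasis U, map_sSup, ← Set.image_comp, sSup_image']
    rfl
  right_inv g := by
    ext U
    exact extend_toOpens g U

end TopologicalSpace.CompactOpens

/-- Let `X` be a quasicompact quasiseparated space whose quasicompact open subsets form a
basis of the topology, and let `K` be any space.  Restriction to quasicompact opens is a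
bijection from frame homomorphisms `Opens X → Opens K` onto bounded lattice homomorphisms
`CompactOpens X → Opens K`. -/
theorem stmt15 {X K : Type*} [TopologicalSpace X] [TopologicalSpace K]
    [CompactSpace X] [QuasiSeparatedSpace X]
    (hbasis : IsTopologicalBasis {U : Set X | IsCompact U ∧ IsOpen U}) :
    ∃ e : FrameHom (Opens X) (Opens K) ≃ BoundedLatticeHom (CompactOpens X) (Opens K),
      ∀ (f : FrameHom (Opens X) (Opens K)) (U : CompactOpens X),
        e f U = f U.toOpens :=
  ⟨CompactOpens.restrictFrameHomEquiv hbasis, fun _ _ => rfl⟩
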